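/- Let Z be a standard Borel space and let A ⊆ Z × H be a Borel set such that for every z ∈ Z the section A_z is nonempty, compact, and norm separable. Then for every ε > 0 there exists a countable ordinal ξ_ε such that 𝔻_ε^{(ξ_ε)}(A_z) = ∅ for every z ∈ Z. -/

import Mathlib

noncomputable section

/-- `H = [-1,1]^ℕ`, the product of countably many copies of `[-1,1]`, with the
product topology (and its Borel σ-algebra). -/
abbrev H : Type := ℕ → Set.Icc (-1 : ℝ) 1

/-- The supremum distance `‖f − g‖_∞ = sup_n |f(n) − g(n)|` on `H`. -/
noncomputable def normDist (f g : H) : ℝ := ⨆ n, |(f n : ℝ) - (g n : ℝ)|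

/-- The norm diameter of `S ⊆ H`: `sup {‖f − g‖_∞ : f, g ∈ S}`. -/
noncomputable def normDiam (S : Set H) : ℝ :=
  sSup {d : ℝ | ∃ f ∈ S, ∃ g ∈ S, d = normDist f g}

/-- `S ⊆ H` is norm separable: separable w.r.t. the metric `(f,g) ↦ ‖f − g‖_∞`. -/
def NormSeparable (S : Set H) : Prop :=
  ∃ D : Set H, D.Countable ∧ D ⊆ S ∧ ∀ f ∈ S, ∀ δ : ℝ, 0 < δ → ∃ g ∈ D, normDist f g < δ

/-- The Szlenk-type derivative `𝔻_ε(K)`: points of `K` all of whose open neighbourhoods `U`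
have `K ∩ U` of norm diameter greater than `ε`. -/
def Dstar (ε : ℝ) (K : Set H) : Set H :=
  {f | f ∈ K ∧ ∀ U : Set H, IsOpen U → f ∈ U → ε < normDiam (K ∩ U)}

/-- Transfinite iterates of a derivation on sets: `D^{(0)}(K) = K`,
`D^{(ξ+1)}(K) = D(D^{(ξ)}(K))`, and intersections at limit stages. -/
noncomputable def derivIter {α : Type*} (D : Set α → Set α) (K : Set α) (o : Ordinal) :
    Set α :=
  Ordinal.limitRecOn o K (fun _ ih => D ih) (fun o _ ih => ⋂ (ζ : Ordinal) (h : ζ < o), ih ζ h)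

open Set Filter Topology

theorem derivIter_zero' {α : Type*} (D : Set α → Set α) (K : Set α) :
    derivIter D K 0 = K := by
  simp [derivIter]

theorem derivIter_succ' {α : Type*} (D : Set α → Set α) (K : Set α) (o : Ordinal) :
    derivIter D K (o + 1) = D (derivIter D K o) := by
  unfold derivIter
  rw [Ordinal.limitRecOn_add_one]

theorem derivIter_limit' {α : Type*} (D : Set α → Set α) (K : Set α) (o : Ordinal)
    (ho : Order.IsSuccLimit o) :
    derivIter D K o = ⋂ (ζ : Ordinal) (_ : ζ < o), derivIter D K ζ := by
  unfold derivIter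
  rw [Ordinal.limitRecOn_limit _ _ _ _ ho]

theorem derivIter_anti {α : Type*} (D : Set α → Set α) (hD : ∀ S, D S ⊆ S) (K : Set α)
    (ξ : Ordinal) : ∀ ζ ≤ ξ, derivIter D K ξ ⊆ derivIter D K ζ := by
  induction ξ using Ordinal.limitRecOn with
  | zero => intro ζ h; have : ζ = 0 := by simpa using h
            rw [this]
  | add_one o ih =>
    intro ζ h
    rcases h.eq_or_lt with h | h
    · rw [h]
    · rw [derivIter_succ']
      exact (hD _).trans (ih ζ (Order.lt_add_one_iff.1 h))
  | limit o ho ih =>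
    intro ζ h
    rcases h.eq_or_lt with h | h
    · rw [h]
    · rw [derivIter_limit' _ _ _ ho]
      exact iInter₂_subset ζ h

theorem abstract_bound {I C : Type} [Countable C] (F : ℕ → Set I) (hF : ∀ n, (F n).Finite)
    (hmono : Monotone F) (hF0 : F 0 = ∅) (hcov : ∀ i, ∃ n, i ∈ F n) [Nonempty C]
    (P : ℕ → Ordinal → (I → C) → Prop)
    (hanti : ∀ n ξ ζ x, ζ ≤ ξ → P n ξ x → P n ζ x)
    (hext : ∀ n ξ x, P n (ξ + 1) x → ∃ x', P (n + 1) ξ x' ∧ EqOn x' x (F n))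
    (h0 : ∀ ξ < Ordinal.omega 1, ∃ x, P 0 ξ x) :
    ∃ x : I → C, ∀ n, ∃ y, P n 0 y ∧ EqOn y x (F n) := by
  let Good : ℕ → (I → C) → Prop := fun n p =>
    ∀ ξ < Ordinal.omega 1, ∃ x, P n ξ x ∧ EqOn x p (F n)
  have step : ∀ n p, Good n p → ∃ p', Good (n + 1) p' ∧ EqOn p' p (F n) := by
    intro n p hp
    by_contra hcon
    push Not at hcon
    have hfin : Finite (F (n + 1)) := hF (n + 1)
    have key : ∀ r : F (n + 1) → C, ∃ ξ < Ordinal.omega 1, ∀ x, P (n + 1) ξ x →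
        EqOn x p (F n) → ¬ (∀ i : F (n + 1), x i = r i) := by
      intro r
      by_cases hr : ∃ p' : I → C, (∀ i : F (n + 1), p' i = r i) ∧ EqOn p' p (F n)
      · obtain ⟨p', h1, h2⟩ := hr
        have : ¬ Good (n + 1) p' := fun h => hcon p' h h2
        simp only [Good] at this
        push Not at this
        obtain ⟨ξ, hξ, hx⟩ := this
        refine ⟨ξ, hξ, fun x hPx _ hxr => hx x hPx ?_⟩
        intro i hi
        rw [hxr ⟨i, hi⟩, h1 ⟨i, hi⟩]
      · exact ⟨0, Ordinal.omega_pos 1, fun x _ hxp hxr => hr ⟨x, hxr, hxp⟩⟩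
    choose g hg1 hg2 using key
    have hsup : iSup g < Ordinal.omega 1 := Ordinal.iSup_lt_omega_one hg1
    obtain ⟨x, hx, hxp⟩ := hp (iSup g + 1)
      ((Cardinal.isSuccLimit_omega 1).add_one_lt hsup)
    obtain ⟨x', hx', hxx⟩ := hext _ _ _ hx
    refine hg2 (fun i => x' i) x' (hanti _ _ _ _ (Ordinal.le_iSup g _) hx') ?_ (fun _ => rfl)
    exact hxx.trans hxp
  choose! nx hnx1 hnx2 using step
  let c : C := Classical.arbitrary C
  let q : ℕ → (I → C) := fun n => Nat.rec (fun _ => c) (fun n p => nx n p) n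
  have hq : ∀ n, Good n (q n) := by
    intro n
    induction n with
    | zero =>
      intro ξ hξ
      obtain ⟨x, hx⟩ := h0 ξ hξ
      exact ⟨x, hx, by simp [hF0]⟩
    | succ n ih => exact hnx1 n _ ih
  have hq1 : ∀ n, EqOn (q (n + 1)) (q n) (F n) := fun n => hnx2 n _ (hq n)
  have hq2 : ∀ n m, n ≤ m → EqOn (q m) (q n) (F n) := by
    intro n m h
    induction m, h using Nat.le_induction with
    | base => exact fun _ _ => rfl
    | succ m h ih => exact ((hq1 m).mono (hmono h)).trans ih
  choose N hN using hcov
  refine ⟨fun i => q (N i) i, fun n => ?_⟩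
  obtain ⟨y, hy, hyq⟩ := hq n 0 (Ordinal.omega_pos 1)
  refine ⟨y, hy, fun i hi => ?_⟩
  rw [hyq hi]
  rcases le_total n (N i) with h | h
  · exact (hq2 _ _ h hi).symm
  · exact hq2 _ _ h (hN i)

theorem normDist_bdd (f g : H) : BddAbove (range fun n => |(f n : ℝ) - (g n : ℝ)|) := by
  refine ⟨2, ?_⟩
  rintro _ ⟨n, rfl⟩
  have h1 := (f n).2
  have h2 := (g n).2
  simp only [mem_Icc] at h1 h2
  rw [abs_le]
  constructor <;> linarith

theorem le_normDist (f g : H) (n : ℕ) : |(f n : ℝ) - (g n : ℝ)| ≤ normDist f g :=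
  le_ciSup (normDist_bdd f g) n

theorem split_exists {ε : ℝ} (hε : 0 < ε) {S : Set H} (h : ε < normDiam S) :
    ∃ (G : Bool → H) (m : ℕ) (p q : ℚ), (∀ b, G b ∈ S) ∧ (G false m : ℝ) < p ∧
      (q : ℝ) < G true m ∧ (p : ℝ) + ε < q := by
  have hne : {d : ℝ | ∃ f ∈ S, ∃ g ∈ S, d = normDist f g}.Nonempty := by
    by_contra hcon
    rw [not_nonempty_iff_eq_empty] at hcon
    rw [normDiam, hcon, Real.sSup_empty] at h
    linarith
  obtain ⟨_, ⟨f, hf, g, hg, rfl⟩, hd⟩ := exists_lt_of_lt_csSup hne h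
  obtain ⟨m, hm⟩ := exists_lt_of_lt_ciSup hd
  have main : ∀ f ∈ S, ∀ g ∈ S, (f m : ℝ) + ε < g m → ∃ (G : Bool → H) (m : ℕ) (p q : ℚ),
      (∀ b, G b ∈ S) ∧ (G false m : ℝ) < p ∧ (q : ℝ) < G true m ∧ (p : ℝ) + ε < q := by
    intro f hf g hg hfg
    obtain ⟨p, hp1, hp2⟩ := exists_rat_btwn (show (f m : ℝ) < g m - ε by linarith)
    obtain ⟨q, hq1, hq2⟩ := exists_rat_btwn (show (p : ℝ) + ε < g m by linarith)
    refine ⟨fun b => if b then g else f, m, p, q, ?_, by simpa using hp1, by simpa using hq2, hq1⟩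
    intro b
    cases b <;> simpa
  rcases lt_abs.1 hm with h | h
  · exact main g hg f hf (by linarith)
  · exact main f hf g hg (by linarith)

/-- constraint imposed by side `b` of a splitting datum -/
def SplitCon (d : ℕ × ℚ × ℚ) (b : Bool) (f : H) : Prop :=
  if b then (d.2.2 : ℝ) < f d.1 else (f d.1 : ℝ) < d.2.1

theorem isOpen_con (d : ℕ × ℚ × ℚ) (b : Bool) : IsOpen {f : H | SplitCon d b f} := by
  cases b
  · simp only [SplitCon, Bool.false_eq_true, if_false]
    exact isOpen_lt (by fun_prop) (by fun_prop)
  · simp only [SplitCon, if_true]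
    exact isOpen_lt (by fun_prop) (by fun_prop)

theorem isOpen_cons (d : List Bool → ℕ × ℚ × ℚ) (s : List Bool) :
    IsOpen {f : H | ∀ b t, (b :: t) <:+ s → SplitCon (d t) b f} := by
  induction s with
  | nil => simp
  | cons c u ih =>
    convert (isOpen_con (d u) c).inter ih using 1
    ext f
    simp only [List.suffix_cons_iff, List.cons.injEq, mem_setOf_eq, mem_inter_iff]
    constructor
    · intro h
      exact ⟨h c u (Or.inl ⟨rfl, rfl⟩), fun b t hbt => h b t (Or.inr hbt)⟩
    · rintro ⟨h1, h2⟩ b t (⟨rfl, rfl⟩ | h)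
      · exact h1
      · exact h2 b t h

abbrev Code := List Bool × ℕ → ℕ × (ℕ × ℚ × ℚ)

def Code.w (x : Code) (s : List Bool) : ℕ → ℕ := fun k => (x (s, k)).1
def Code.d (x : Code) (s : List Bool) : ℕ × ℚ × ℚ := (x (s, 0)).2

def PP {Z : Type} (A : Set (Z × H)) (φ : (ℕ → ℕ) → Z × H) (ε : ℝ) (n : ℕ) (ξ : Ordinal)
    (x : Code) : Prop :=
  ∃ z : Z, (∀ s : List Bool, s.length ≤ n → (φ (x.w s)).1 = z) ∧
    (∀ s : List Bool, s.length ≤ n → ∀ b t, (b :: t) <:+ s → SplitCon (x.d t) b (φ (x.w s)).2) ∧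
    (∀ t : List Bool, t.length < n → ((x.d t).2.1 : ℝ) + ε < (x.d t).2.2) ∧
    (∀ s : List Bool, s.length = n →
      (φ (x.w s)).2 ∈ derivIter (Dstar ε) {f : H | (z, f) ∈ A} ξ)

def FF (n : ℕ) : Set (List Bool × ℕ) := {s | s.length < n} ×ˢ {k | k < n}

theorem Dstar_subset (ε : ℝ) (S : Set H) : Dstar ε S ⊆ S := fun _ h => h.1

theorem PP_ext {Z : Type} (A : Set (Z × H)) (φ : (ℕ → ℕ) → Z × H) (hφ : range φ = A) {ε : ℝ}
    (hε : 0 < ε) (n : ℕ) (ξ : Ordinal) (x : Code) (hx : PP A φ ε n (ξ + 1) x) :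
    ∃ x', PP A φ ε (n + 1) ξ x' ∧ EqOn x' x (FF n) := by
  obtain ⟨z, h1, h2, h3, h4⟩ := hx
  have key : ∀ s : List Bool, ∃ (W : Bool → ℕ → ℕ) (d : ℕ × ℚ × ℚ), s.length = n →
      (∀ b, (φ (W b)).1 = z) ∧
      (∀ b, (φ (W b)).2 ∈ derivIter (Dstar ε) {f : H | (z, f) ∈ A} ξ) ∧
      (∀ b c t, (c :: t) <:+ s → SplitCon (x.d t) c (φ (W b)).2) ∧
      (∀ b, SplitCon d b (φ (W b)).2) ∧ (d.2.1 : ℝ) + ε < d.2.2 := by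
    intro s
    by_cases hs : s.length = n
    swap
    · exact ⟨fun _ _ => 0, (0, 0, 0), fun h => absurd h hs⟩
    have hf := h4 s hs
    rw [derivIter_succ'] at hf
    obtain ⟨G, m, p, q, hG, hp, hq, hpq⟩ :=
      split_exists hε (hf.2 _ (isOpen_cons x.d s) (h2 s hs.le))
    have hGA : ∀ b, ∃ w, φ w = (z, G b) := by
      intro b
      have := derivIter_anti _ (Dstar_subset ε) _ ξ 0 (zero_le) (hG b).1
      rw [derivIter_zero'] at this
      have h : (z, G b) ∈ range φ := hφ ▸ this
      exact h
    choose W hW using hGA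
    refine ⟨W, (m, p, q), fun _ => ⟨?_, ?_, ?_, ?_, hpq⟩⟩
    · intro b; rw [hW]
    · intro b; rw [hW]; exact (hG b).1
    · intro b; rw [hW]; exact (hG b).2
    · intro b; rw [hW]; cases b
      · simpa [SplitCon] using hp
      · simpa [SplitCon] using hq
  choose W d hWd using key
  let x' : Code := fun i =>
    (if i.1.length ≤ n then (x i).1 else W i.1.tail (i.1.headD false) i.2,
      if i.1.length = n then d i.1 else (x i).2)
  have hw1 : ∀ s : List Bool, s.length ≤ n → x'.w s = x.w s := by
    intro s hs; funext k; simp [x', Code.w, hs]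
  have hw2 : ∀ b (s : List Bool), s.length = n → x'.w (b :: s) = W s b := by
    intro b s hs; funext k; simp [x', Code.w, hs]
  have hd1 : ∀ s : List Bool, s.length < n → x'.d s = x.d s := by
    intro s hs; simp [x', Code.d, hs.ne]
  have hd2 : ∀ s : List Bool, s.length = n → x'.d s = d s := by
    intro s hs; simp [x', Code.d, hs]
  have cas : ∀ s : List Bool, s.length ≤ n + 1 →
      s.length ≤ n ∨ ∃ b u, s = b :: u ∧ u.length = n := by
    intro s hs
    rcases s with _ | ⟨b, u⟩
    · left; simp
    · simp only [List.length_cons] at hs ⊢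
      by_cases h : u.length = n
      · right; exact ⟨b, u, rfl, h⟩
      · left; omega
  refine ⟨x', ⟨z, ?_, ?_, ?_, ?_⟩, ?_⟩
  · intro s hs
    rcases cas s hs with h | ⟨b, u, rfl, hu⟩
    · rw [hw1 s h]; exact h1 s h
    · rw [hw2 b u hu]; exact (hWd u hu).1 b
  · intro s hs c t hct
    rcases cas s hs with h | ⟨b, u, rfl, hu⟩
    · have hl := hct.length_le
      simp only [List.length_cons] at hl
      rw [hw1 s h, hd1 t (by omega)]; exact h2 s h c t hct
    · rw [hw2 b u hu]
      rcases List.suffix_cons_iff.1 hct with h | h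
      · simp only [List.cons.injEq] at h
        obtain ⟨rfl, rfl⟩ := h
        rw [hd2 t hu]
        exact (hWd t hu).2.2.2.1 c
      · have hl := h.length_le
        simp only [List.length_cons] at hl
        rw [hd1 t (by omega)]
        exact (hWd u hu).2.2.1 b c t h
  · intro t ht
    by_cases h : t.length = n
    · rw [hd2 t h]; exact (hWd t h).2.2.2.2
    · rw [hd1 t (by omega)]; exact h3 t (by omega)
  · intro s hs
    rcases cas s hs.le with h | ⟨b, u, rfl, hu⟩
    · omega
    · rw [hw2 b u hu]; exact (hWd u hu).2.1 b
  · rintro ⟨s, k⟩ ⟨hs, -⟩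
    simp only [mem_setOf_eq] at hs
    simp [x', hs.le, hs.ne]

/-- restriction of a branch, reversed -/
def res (α : ℕ → Bool) : ℕ → List Bool
  | 0 => []
  | n + 1 => α n :: res α n

theorem res_length (α : ℕ → Bool) (n : ℕ) : (res α n).length = n := by
  induction n with
  | zero => rfl
  | succ n ih => simp [res, ih]

theorem res_suffix (α : ℕ → Bool) {n m : ℕ} (h : n ≤ m) : res α n <:+ res α m := by
  induction m, h using Nat.le_induction with
  | base => exact List.suffix_refl _
  | succ m h ih => exact ih.trans (List.suffix_cons _ _)

theorem res_congr (α β : ℕ → Bool) (n : ℕ) (h : ∀ m < n, α m = β m) : res α n = res β n := by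
  induction n with
  | zero => rfl
  | succ n ih => simp [res, h n (by omega), ih (fun m hm => h m (by omega))]

/-- A Cantor scheme inside a compact set contradicts norm separability. -/
theorem scheme_false (K : Set H) (hK : IsCompact K) (hsep : NormSeparable K) {ε : ℝ} (hε : 0 < ε)
    (f : List Bool → H) (hf : ∀ s, f s ∈ K) (d : List Bool → ℕ × ℚ × ℚ)
    (hd : ∀ t, ((d t).2.1 : ℝ) + ε < (d t).2.2)
    (h0 : ∀ s t, (false :: t) <:+ s → (f s (d t).1 : ℝ) ≤ (d t).2.1)
    (h1 : ∀ s t, (true :: t) <:+ s → ((d t).2.2 : ℝ) ≤ f s (d t).1) : False := by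
  have lim : ∀ α : ℕ → Bool, ∃ F ∈ K, ∀ n,
      (α n = false → (F (d (res α n)).1 : ℝ) ≤ (d (res α n)).2.1) ∧
      (α n = true → ((d (res α n)).2.2 : ℝ) ≤ F (d (res α n)).1) := by
    intro α
    obtain ⟨F, hFK, ψ, hψ, hT⟩ := hK.tendsto_subseq (fun n => hf (res α n))
    refine ⟨F, hFK, fun n => ?_⟩
    have hT' : Tendsto (fun k => (f (res α (ψ k)) (d (res α n)).1 : ℝ)) atTop
        (𝓝 (F (d (res α n)).1 : ℝ)) :=
      (continuous_subtype_val.tendsto _).comp ((tendsto_pi_nhds.1 hT) _)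
    have ev : ∀ᶠ k in atTop, (α n :: res α n) <:+ res α (ψ k) := by
      filter_upwards [eventually_ge_atTop (n + 1)] with k hk
      exact res_suffix α (hk.trans (hψ.id_le k))
    constructor
    · intro hα
      refine le_of_tendsto hT' ?_
      filter_upwards [ev] with k hk
      exact h0 _ _ (hα ▸ hk)
    · intro hα
      refine ge_of_tendsto hT' ?_
      filter_upwards [ev] with k hk
      exact h1 _ _ (hα ▸ hk)
  choose F hFK hF using lim
  obtain ⟨D, hDc, hDK, hD⟩ := hsep
  choose g hgD hg using fun α => hD (F α) (hFK α) (ε / 2) (by positivity)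
  have hinj : Function.Injective g := by
    intro α β hab
    by_contra hne
    have hex : ∃ n, α n ≠ β n := Function.ne_iff.1 hne
    classical
    let n := Nat.find hex
    have hn : α n ≠ β n := Nat.find_spec hex
    have hr : res α n = res β n := res_congr _ _ _ fun m hm => by
      simpa using Nat.find_min hex hm
    have ea := (le_normDist (F α) (g α) (d (res α n)).1).trans_lt (hg α)
    have eb := (le_normDist (F β) (g β) (d (res α n)).1).trans_lt (hg β)
    rw [← hab] at eb
    have hdd := hd (res α n)
    have fa := hF α n
    have fb := hF β n
    rw [← hr] at fb
    rw [abs_lt] at ea eb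
    rcases ha : α n with _ | _ <;> rcases hb : β n with _ | _
    · exact hn (ha.trans hb.symm)
    · have := fa.1 ha
      have := fb.2 hb
      linarith
    · have := fa.2 ha
      have := fb.1 hb
      linarith
    · exact hn (ha.trans hb.symm)
  have ecard : Cardinal.mk (ℕ → Bool) = Cardinal.continuum := by simp
  have : Countable D := hDc
  have hc : Countable (ℕ → Bool) :=
    Function.Injective.countable (f := fun α => (⟨g α, hgD α⟩ : D))
      (fun a b h => hinj (by simpa using h))
  have := Cardinal.mk_le_aleph0_iff.2 hc
  rw [ecard] at this
  exact absurd this (not_le.2 Cardinal.aleph0_lt_continuum)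

theorem exists_uniform_countable_rank (Z : Type) [MeasurableSpace Z] [StandardBorelSpace Z]
    (A : Set (Z × H)) (hA : MeasurableSet A)
    (hne : ∀ z : Z, {f : H | (z, f) ∈ A}.Nonempty)
    (hcpt : ∀ z : Z, IsCompact {f : H | (z, f) ∈ A})
    (hsep : ∀ z : Z, NormSeparable {f : H | (z, f) ∈ A})
    (ε : ℝ) (hε : 0 < ε) :
    ∃ ξ : Ordinal, ξ.card ≤ Cardinal.aleph0 ∧
      ∀ z : Z, derivIter (Dstar ε) {f : H | (z, f) ∈ A} ξ = ∅ := by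
  by_contra hcon
  push Not at hcon
  letI := upgradeStandardBorel Z
  have han := hA.analyticSet
  rw [MeasureTheory.AnalyticSet] at han
  rcases han with hA0 | ⟨φ, hφc, hφ⟩
  · obtain ⟨z, -⟩ := hcon 0 (by simp)
    obtain ⟨f, hf⟩ := hne z
    simp [hA0] at hf
  obtain ⟨x, hx⟩ := abstract_bound FF
    (fun n => (List.finite_length_lt Bool n).prod (finite_lt_nat n))
    (fun n m h => prod_mono (fun s hs => lt_of_lt_of_le hs h) (fun s hs => lt_of_lt_of_le hs h))
    (by simp [FF])
    (fun i => ⟨i.1.length + i.2 + 1, by constructor <;> simp <;> omega⟩)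
    (PP A φ ε)
    (fun n ξ ζ x h ⟨z, h1, h2, h3, h4⟩ => ⟨z, h1, h2, h3, fun s hs =>
      derivIter_anti _ (Dstar_subset ε) _ ξ ζ h (h4 s hs)⟩)
    (fun n ξ x hx => PP_ext A φ hφ hε n ξ x hx)
    (by
      intro ξ hξ
      have hξ' : ξ.card ≤ Cardinal.aleph0 := by
        rw [← Cardinal.ord_aleph, Cardinal.lt_ord, ← Cardinal.succ_aleph0] at hξ
        exact Order.lt_succ_iff.1 hξ
      obtain ⟨z, f, hf⟩ := hcon ξ hξ'
      have := derivIter_anti _ (Dstar_subset ε) _ ξ 0 (zero_le) hf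
      rw [derivIter_zero'] at this
      have h : (z, f) ∈ range φ := hφ ▸ this
      obtain ⟨w, hw⟩ := h
      refine ⟨fun i => (w i.2, (0, 0, 0)), z, ?_, ?_, ?_, ?_⟩
      · intro s _
        change (φ w).1 = z
        rw [hw]
      · intro s hs b t hbt
        have := hbt.length_le
        simp at this hs
        simp [hs] at this
      · intro t ht; omega
      · intro s _
        change (φ w).2 ∈ _
        rw [hw]
        exact hf)
  choose y hy hyx using hx
  choose z hz1 hz2 hz3 hz4 using hy
  have hw : ∀ s, Tendsto (fun n => Code.w (y n) s) atTop (𝓝 (Code.w x s)) := by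
    intro s
    rw [tendsto_pi_nhds]
    intro k
    apply tendsto_const_nhds.congr'
    filter_upwards [eventually_ge_atTop (s.length + k + 1)] with n hn
    have : (s, k) ∈ FF n := by constructor <;> simp <;> omega
    simp [Code.w, hyx n this]
  have hd : ∀ s, ∀ᶠ n in atTop, Code.d (y n) s = Code.d x s := by
    intro s
    filter_upwards [eventually_ge_atTop (s.length + 1)] with n hn
    have : (s, 0) ∈ FF n := by constructor <;> simp <;> omega
    simp [Code.d, hyx n this]
  have hT : ∀ s, Tendsto (fun n => φ (Code.w (y n) s)) atTop (𝓝 (φ (Code.w x s))) := fun s =>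
    (hφc.tendsto _).comp (hw s)
  have hTz : ∀ s, Tendsto z atTop (𝓝 (φ (Code.w x s)).1) := by
    intro s
    refine ((continuous_fst.tendsto _).comp (hT s)).congr' ?_
    filter_upwards [eventually_ge_atTop s.length] with n hn
    exact hz1 n s hn
  have hzz : ∀ s, (φ (Code.w x s)).1 = (φ (Code.w x [])).1 := fun s =>
    tendsto_nhds_unique (hTz s) (hTz [])
  have hTf : ∀ s m, Tendsto (fun n => ((φ (Code.w (y n) s)).2 m : ℝ)) atTop
      (𝓝 ((φ (Code.w x s)).2 m : ℝ)) := fun s m =>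
    (continuous_subtype_val.tendsto _).comp
      ((tendsto_pi_nhds.1 ((continuous_snd.tendsto _).comp (hT s))) m)
  refine scheme_false _ (hcpt (φ (Code.w x [])).1) (hsep _) hε (fun s => (φ (Code.w x s)).2)
    ?_ (Code.d x) ?_ ?_ ?_
  · intro s
    rw [← hzz s]
    change φ _ ∈ A
    rw [← hφ]
    exact mem_range_self _
  · intro t
    obtain ⟨n, hn1, hn2⟩ := ((hd t).and (eventually_ge_atTop (t.length + 1))).exists
    rw [← hn1]
    exact hz3 n t (by omega)
  · intro s t hst
    refine le_of_tendsto (hTf s _) ?_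
    filter_upwards [hd t, eventually_ge_atTop s.length] with n hn1 hn2
    have := hz2 n s hn2 _ _ hst
    simp only [hn1, SplitCon, Bool.false_eq_true, if_false] at this
    exact this.le
  · intro s t hst
    refine ge_of_tendsto (hTf s _) ?_
    filter_upwards [hd t, eventually_ge_atTop s.length] with n hn1 hn2
    have := hz2 n s hn2 _ _ hst
    simp only [hn1, SplitCon, if_true] at this
    exact this.le
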